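/- (Wiebe's theorem, ring case) Let (a₁,…,aₙ) and (c₁,…,cₙ) be sequences in a commutative ring A with ⟨c⟩ ⊆ ⟨a⟩, certified by a square matrix U with U·(a₁,…,aₙ)ᵗ = (c₁,…,cₙ)ᵗ and Δ = det U. Assume (c₁,…,cₙ) is a regular sequence. Then (⟨c⟩ : Δ) = ⟨a⟩ and (⟨c⟩ : ⟨a⟩) = ⟨Δ⟩ + ⟨c⟩. -/

import Mathlib

open Polynomial in
theorem wiebe_mem_sup {R : Type*} [CommRing R] {K : Ideal R} {b x : R} :
    x ∈ K ⊔ Ideal.span {b} ↔ ∃ y, x - b * y ∈ K := by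
  rw [sup_comm, Ideal.mem_span_singleton_sup]
  constructor
  · rintro ⟨y, k, hk, rfl⟩
    exact ⟨y, by convert hk using 1; ring⟩
  · rintro ⟨y, hy⟩
    exact ⟨y, _, hy, by ring⟩

open Polynomial in
/-- McCoy modulo an ideal. -/
theorem wiebe_mccoy {R : Type*} [CommRing R] (J : Ideal R) (f : R[X])
    (h : ∀ r, (∀ m, r * f.coeff m ∈ J) → r ∈ J) (g : R[X])
    (hg : f * g ∈ J.map (C : R →+* R[X])) : g ∈ J.map (C : R →+* R[X]) := by
  have key : ∀ p : R[X], p ∈ J.map (C : R →+* R[X]) ↔ p.map (Ideal.Quotient.mk J) = 0 := by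
    intro p
    rw [Ideal.mem_map_C_iff, Polynomial.ext_iff]
    simp [Ideal.Quotient.eq_zero_iff_mem]
  rw [key] at hg ⊢
  rw [Polynomial.map_mul] at hg
  have hn : f.map (Ideal.Quotient.mk J) ∈ nonZeroDivisors (R ⧸ J)[X] := by
    by_contra hc
    rw [Polynomial.notMem_nonZeroDivisors_iff] at hc
    obtain ⟨r, hr2, hr⟩ := hc
    obtain ⟨r, rfl⟩ := Ideal.Quotient.mk_surjective r
    apply hr2
    rw [Ideal.Quotient.eq_zero_iff_mem]
    apply h
    intro m
    have := congrArg (fun p => p.coeff m) hr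
    rw [← Ideal.Quotient.eq_zero_iff_mem]
    simpa using this
  exact (mem_nonZeroDivisors_iff.mp hn).1 _ hg

open Polynomial in
theorem wiebe_C_reg {R : Type*} [CommRing R] (J : Ideal R) (c : R)
    (h : ∀ r, c * r ∈ J → r ∈ J) (g : R[X])
    (hg : C c * g ∈ J.map (C : R →+* R[X])) : g ∈ J.map (C : R →+* R[X]) := by
  rw [Ideal.mem_map_C_iff] at hg ⊢
  intro m
  apply h
  simpa using hg m

open Polynomial in
theorem wiebe_C_mem {R : Type*} [CommRing R] (J : Ideal R) (x : R)
    (h : C x ∈ J.map (C : R →+* R[X])) : x ∈ J := by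
  rw [Ideal.mem_map_C_iff] at h
  simpa using h 0

open Polynomial in
theorem wiebe_map {R ι : Type*} [CommRing R] (I : Ideal R) (c : ι → R) (S : Set ι) :
    (I ⊔ Ideal.span (c '' S)).map (C : R →+* R[X]) =
      I.map C ⊔ Ideal.span ((fun i => C (c i)) '' S) := by
  rw [Ideal.map_sup, Ideal.map_span, Set.image_image]

/-- Cramer modulo an ideal. -/
theorem wiebe_cramer {R : Type*} [CommRing R] {n : ℕ} (I : Ideal R) (a c : Fin n → R)
    (U : Matrix (Fin n) (Fin n) R) (hU : ∀ i, U.mulVec a i - c i ∈ I) (j : Fin n) :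
    U.det * a j - ∑ i, U.adjugate j i * c i ∈ I := by
  have h1 : U.det * a j = ∑ i, U.adjugate j i * U.mulVec a i := by
    have := congrFun (Matrix.mulVec_mulVec a U.adjugate U) j
    rw [Matrix.adjugate_mul, Matrix.smul_mulVec, Matrix.one_mulVec] at this
    simpa [Matrix.mulVec, dotProduct] using this.symm
  rw [h1, ← Finset.sum_sub_distrib]
  refine Ideal.sum_mem _ fun i _ => ?_
  rw [← mul_sub]
  exact Ideal.mul_mem_left _ _ (hU i)

/-- Elimination of the first column. -/
theorem wiebe_det {R : Type*} [CommRing R] {n : ℕ} (U : Matrix (Fin (n+1)) (Fin (n+1)) R)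
    (t : Fin (n+1) → R) (ht : t 0 = 1) :
    ∑ j, t j * U.adjugate j 0 =
      (Matrix.of fun i j : Fin n => U i.succ j.succ - U i.succ 0 * t j.succ).det := by
  have h1 : ∑ j, t j * U.adjugate j 0 = (U.updateRow 0 t).det := by
    rw [Matrix.det_eq_sum_mul_adjugate_row _ 0]
    simp [Matrix.adjugate_apply]
  rw [h1]
  have h2 : (U.updateRow 0 t).det = (Matrix.of fun i j : Fin (n+1) =>
      U.updateRow 0 t i j - (if j = 0 then 0 else t j) * U.updateRow 0 t i 0).det := by
    rw [← Matrix.det_transpose, ← Matrix.det_transpose (Matrix.of _)]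
    refine Matrix.det_eq_of_forall_row_eq_smul_add_const
      (fun j => if j = 0 then 0 else t j) 0 (by simp) ?_
    intro i j
    simp
  rw [h2, Matrix.det_succ_row_zero, Finset.sum_eq_single 0]
  · simp only [Matrix.of_apply, Matrix.updateRow_self]
    simp only [ht, Fin.val_zero, pow_zero, one_mul, if_true, zero_mul, sub_zero]
    congr 1
    ext i j
    simp [Matrix.submatrix_apply, Fin.succ_ne_zero, mul_comm]
  · intro j _ hj
    simp [hj, ht]
  · simp

open Polynomial in
theorem wiebe_main (n : ℕ) : ∀ {A : Type*} [CommRing A] (I : Ideal A) (a c : Fin n → A)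
    (U : Matrix (Fin n) (Fin n) A) (_ : ∀ i, U.mulVec a i - c i ∈ I)
    (_ : ∀ (S : Set (Fin n)) (i : Fin n), i ∉ S → ∀ x : A,
      c i * x ∈ I ⊔ Ideal.span (c '' S) → x ∈ I ⊔ Ideal.span (c '' S)),
    (∀ x, x * U.det ∈ I ⊔ Ideal.span (Set.range c) → x ∈ I ⊔ Ideal.span (Set.range a)) ∧
    (∀ x, (∀ j, x * a j ∈ I ⊔ Ideal.span (Set.range c)) →
      x ∈ (I ⊔ Ideal.span (Set.range c)) ⊔ Ideal.span {U.det}) := by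
  induction n with
  | zero =>
    intro A _ I a c U hU hreg
    refine ⟨fun x hx => ?_, fun x hx => ?_⟩
    · simpa using hx
    · simp
  | succ n ih =>
    intro A _ I a c U hU hreg
    -- general facts
    let t : Fin (n+1) → A[X] := fun j => X ^ (j : ℕ)
    let b : A[X] := ∑ j, t j * C (a j)
    have hbcoeff : ∀ j : Fin (n+1), b.coeff j = a j := by
      intro j
      simp only [b, t, finsetSum_coeff, coeff_X_pow_mul', coeff_C]
      rw [Finset.sum_eq_single j]
      · simp
      · intro k _ hk
        have : (k : ℕ) ≠ j := fun h => hk (Fin.ext h)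
        split_ifs <;> first | rfl | omega
      · simp
    let J : Set (Fin (n+1)) → Ideal A := fun S => I ⊔ Ideal.span (c '' S)
    let M : Ideal A → Ideal A[X] := fun L => L.map (C : A →+* A[X])
    have hIJ : ∀ S, I ≤ J S := fun S => le_sup_left
    have hJins : ∀ S i, J (insert i S) = J S ⊔ Ideal.span {c i} := by
      intro S i
      simp only [J, Set.image_insert_eq]
      rw [Ideal.span_insert, sup_comm (Ideal.span {c i}), sup_assoc]
    have hMins : ∀ S i, M (J (insert i S)) = M (J S) ⊔ Ideal.span {C (c i)} := by
      intro S i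
      simp only [M]
      rw [hJins, Ideal.map_sup, Ideal.map_span, Set.image_singleton]
    have hcreg : ∀ S i, i ∉ S → ∀ x, C (c i) * x ∈ M (J S) → x ∈ M (J S) :=
      fun S i hi x hx => wiebe_C_reg _ _ (hreg S i hi) x hx
    have hbreg : ∀ S, (0 : Fin (n+1)) ∉ S → ∀ x, b * x ∈ M (J S) → x ∈ M (J S) := by
      intro S hS x hx
      refine wiebe_mccoy _ b ?_ x hx
      intro r hr
      apply hreg S 0 hS
      have h1 : (U.mulVec a 0 - c 0) * r ∈ J S := Ideal.mul_mem_right _ _ (hIJ S (hU 0))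
      have h2 : U.mulVec a 0 * r ∈ J S := by
        simp only [Matrix.mulVec, dotProduct, Finset.sum_mul]
        refine Ideal.sum_mem _ fun j _ => ?_
        have := Ideal.mul_mem_left _ (U 0 j) (hr j)
        rw [hbcoeff] at this
        convert this using 1; ring
      have := Ideal.sub_mem _ h2 h1
      convert this using 1; ring
    let S₀ : Set (Fin (n+1)) := Set.range Fin.succ
    have h0 : (0 : Fin (n+1)) ∉ S₀ := by
      rintro ⟨i, hi⟩; exact Fin.succ_ne_zero i hi
    have huniv : insert 0 S₀ = Set.univ := by
      ext i; refine Fin.cases ?_ ?_ i <;> simp [S₀]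
    let K := M (J S₀)
    have hKc : M (I ⊔ Ideal.span (Set.range c)) = K ⊔ Ideal.span {C (c 0)} := by
      rw [← hMins, huniv]; simp [J]
    let I' : Ideal A[X] := M I ⊔ Ideal.span {b}
    let a' : Fin n → A[X] := fun j => C (a j.succ)
    let cQ : Fin n → A[X] := fun j => C (c j.succ)
    let U' : Matrix (Fin n) (Fin n) A[X] :=
      Matrix.of fun i j : Fin n => C (U i.succ j.succ) - C (U i.succ 0) * t j.succ
    have hMJ : ∀ S : Set (Fin n), I' ⊔ Ideal.span (cQ '' S) =
        M (J (Fin.succ '' S)) ⊔ Ideal.span {b} := by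
      intro S
      simp only [M, J, I', cQ]
      rw [wiebe_map, Set.image_image, sup_right_comm]
    have hIc' : I' ⊔ Ideal.span (Set.range cQ) = K ⊔ Ideal.span {b} := by
      rw [← Set.image_univ, hMJ, Set.image_univ]
    have hIa' : I' ⊔ Ideal.span (Set.range a') ≤ M (I ⊔ Ideal.span (Set.range a)) := by
      have ha : ∀ j, C (a j) ∈ M (I ⊔ Ideal.span (Set.range a)) := fun j =>
        Ideal.mem_map_of_mem _ (Ideal.mem_sup_right (Ideal.subset_span ⟨j, rfl⟩))
      refine sup_le (sup_le (Ideal.map_mono le_sup_left) ?_) ?_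
      · rw [Ideal.span_singleton_le_iff_mem]
        exact Ideal.sum_mem _ fun j _ => Ideal.mul_mem_left _ _ (ha j)
      · rw [Ideal.span_le]
        rintro _ ⟨j, rfl⟩
        exact ha _
    obtain ⟨ih1, ih2⟩ := ih I' a' cQ U' (by
      intro i
      have h1 : C (U.mulVec a i.succ - c i.succ) ∈ M I := Ideal.mem_map_of_mem _ (hU _)
      rw [wiebe_mem_sup]
      refine ⟨- C (U i.succ 0), ?_⟩
      convert h1 using 1
      simp only [Matrix.mulVec, dotProduct, U', a', cQ, b, Matrix.of_apply, Fin.sum_univ_succ,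
        map_sub, map_add, map_mul, map_sum, sub_mul, Finset.sum_sub_distrib]
      have : ∑ x : Fin n, C (U i.succ 0) * t x.succ * C (a x.succ) =
        C (U i.succ 0) * ∑ x : Fin n, t x.succ * C (a x.succ) := by
        rw [Finset.mul_sum]; simp only [mul_assoc]
      rw [this]
      have ht : t 0 = 1 := by simp [t]
      rw [ht]
      ring) (by
      intro S i hi x hx
      rw [hMJ, wiebe_mem_sup] at hx ⊢
      obtain ⟨y, hy⟩ := hx
      have hi' : i.succ ∉ Fin.succ '' S := by
        rintro ⟨k, hk, hk2⟩
        exact hi (Fin.succ_injective _ hk2 ▸ hk)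
      have h1 : y ∈ M (J (insert i.succ (Fin.succ '' S))) := by
        apply hbreg
        · simp [Fin.succ_ne_zero, (Fin.succ_ne_zero _).symm]
        · rw [hMins, wiebe_mem_sup]
          refine ⟨x, ?_⟩
          have := neg_mem hy
          convert this using 1
          simp only [cQ]; ring
      rw [hMins, wiebe_mem_sup] at h1
      obtain ⟨z, hz⟩ := h1
      refine ⟨z, hcreg _ _ hi' _ ?_⟩
      have := add_mem hy (Ideal.mul_mem_left _ b hz)
      convert this using 1
      simp only [cQ]; ring)
    rw [hIc'] at ih1 ih2
    let d := C U.det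
    have hkey : d * b - U'.det * C (c 0) ∈ K := by
      let V := U.map (C : A →+* A[X])
      have hd : d = V.det := by
        simp only [d, V]; rw [RingHom.map_det]; rfl
      have hdet : ∑ j, t j * V.adjugate j 0 = U'.det := wiebe_det V t (by simp [t])
      have hcr := wiebe_cramer (M I) (fun j => C (a j)) (fun j => C (c j)) V (by
        intro i
        have h1 : C (U.mulVec a i - c i) ∈ M I := Ideal.mem_map_of_mem _ (hU _)
        convert h1 using 1
        simp [V, Matrix.mulVec, dotProduct])
      rw [← hdet, hd]
      simp only [b, Finset.mul_sum, Finset.sum_mul]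
      rw [← Finset.sum_sub_distrib]
      refine Ideal.sum_mem _ fun j _ => ?_
      have h1 : V.det * C (a j) - ∑ i, V.adjugate j i * C (c i) ∈ K :=
        Ideal.map_mono (hIJ S₀) (hcr j)
      have h2 : ∑ i : Fin n, V.adjugate j i.succ * C (c i.succ) ∈ K := by
        refine Ideal.sum_mem _ fun i _ => Ideal.mul_mem_left _ _ (Ideal.mem_map_of_mem _ ?_)
        exact Ideal.mem_sup_right (Ideal.subset_span ⟨_, ⟨i, rfl⟩, rfl⟩)
      rw [Fin.sum_univ_succ] at h1
      have := Ideal.mul_mem_left _ (t j) (add_mem h1 h2)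
      convert this using 1
      ring
    constructor
    · intro x hx
      have hx' : C (x * U.det) ∈ M (I ⊔ Ideal.span (Set.range c)) := Ideal.mem_map_of_mem _ hx
      rw [hKc, wiebe_mem_sup] at hx'
      obtain ⟨y, hy⟩ := hx'
      apply wiebe_C_mem
      apply hIa'
      apply ih1
      rw [wiebe_mem_sup]
      refine ⟨y, hcreg _ _ h0 _ ?_⟩
      have := sub_mem (Ideal.mul_mem_left _ b hy) (Ideal.mul_mem_left _ (C x) hkey)
      convert this using 1
      simp only [d, map_mul]; ring
    · intro x hx
      have hxa : ∀ j, C x * C (a j) ∈ K ⊔ Ideal.span {C (c 0)} := by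
        intro j
        rw [← hKc, ← map_mul]
        exact Ideal.mem_map_of_mem _ (hx j)
      have hxb : C x * b ∈ K ⊔ Ideal.span {C (c 0)} := by
        simp only [b, Finset.mul_sum]
        refine Ideal.sum_mem _ fun j _ => ?_
        rw [mul_left_comm]
        exact Ideal.mul_mem_left _ _ (hxa j)
      rw [wiebe_mem_sup] at hxb
      obtain ⟨y, hy⟩ := hxb
      have hy2 := ih2 y (by
        intro j
        have hz := hxa j.succ
        rw [wiebe_mem_sup] at hz ⊢
        obtain ⟨z, hz⟩ := hz
        refine ⟨z, hcreg _ _ h0 _ ?_⟩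
        have := sub_mem (Ideal.mul_mem_left _ b hz) (Ideal.mul_mem_left _ (C (a j.succ)) hy)
        convert this using 1
        simp only [a']; ring)
      rw [wiebe_mem_sup] at hy2
      obtain ⟨w, hw⟩ := hy2
      rw [wiebe_mem_sup] at hw
      obtain ⟨v, hv⟩ := hw
      apply wiebe_C_mem
      rw [Ideal.map_sup, Ideal.map_span, Set.image_singleton]
      change C x ∈ M (I ⊔ Ideal.span (Set.range c)) ⊔ Ideal.span {d}
      rw [wiebe_mem_sup]
      refine ⟨w, ?_⟩
      rw [hKc, wiebe_mem_sup]
      refine ⟨v, hbreg _ h0 _ ?_⟩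
      have := sub_mem (add_mem hy (Ideal.mul_mem_left _ (C (c 0)) hv))
        (Ideal.mul_mem_left _ w hkey)
      convert this using 1
      ring

theorem wiebe_perm {n : ℕ} (S : Set (Fin n)) (i : Fin n) (hi : i ∉ S) :
    ∃ (σ : Equiv.Perm (Fin n)) (k : Fin n), σ k = i ∧ σ '' {j | j < k} = S := by
  classical
  -- sort by the key: 0 on S, 1 at i, 2 elsewhere
  let f : Fin n → ℕ := fun j => if j ∈ S then 0 else if j = i then 1 else 2
  let σ := Tuple.sort f
  have hm : Monotone (f ∘ σ) := Tuple.monotone_sort f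
  refine ⟨σ, σ.symm i, by simp, ?_⟩
  have hfi : f i = 1 := by simp [f, hi]
  ext j
  constructor
  · rintro ⟨k, hk, rfl⟩
    have h1 : f (σ k) ≤ f i := by simpa using hm (le_of_lt hk)
    by_contra hc
    have h2 : σ k ≠ i := by
      rintro h
      rw [← h] at hk
      simp at hk
    rw [hfi] at h1
    simp [f, hc, h2] at h1
  · intro hj
    refine ⟨σ.symm j, ?_, by simp⟩
    by_contra hc
    have h1 : f i ≤ f j := by simpa using hm (not_lt.mp hc)
    rw [hfi] at h1
    simp [f, hj] at h1

/-- Wiebe's theorem (ring case): if `U·aᵗ = cᵗ` with `Δ = det U`, and `(c₁,…,cₙ)` is a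
regular sequence (completely secant: every permutation of it is a regular sequence), then
`(⟨c⟩ : Δ) = ⟨a⟩` and `(⟨c⟩ : ⟨a⟩) = ⟨Δ⟩ + ⟨c⟩`. -/
theorem stmt17 {A : Type*} [CommRing A] {n : ℕ} (a c : Fin n → A)
    (U : Matrix (Fin n) (Fin n) A) (hU : U.mulVec a = c)
    (hreg : ∀ σ : Equiv.Perm (Fin n), ∀ i : Fin n, ∀ x : A,
      c (σ i) * x ∈ Ideal.span ((c ∘ σ) '' {j | j < i}) →
      x ∈ Ideal.span ((c ∘ σ) '' {j | j < i})) :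
    (Ideal.span (Set.range c)).colon (Ideal.span {U.det}) = Ideal.span (Set.range a)
    ∧ (Ideal.span (Set.range c)).colon (Ideal.span (Set.range a)) =
        Ideal.span {U.det} ⊔ Ideal.span (Set.range c) := by
  have hreg' : ∀ (S : Set (Fin n)) (i : Fin n), i ∉ S → ∀ x : A,
      c i * x ∈ (⊥ : Ideal A) ⊔ Ideal.span (c '' S) → x ∈ (⊥ : Ideal A) ⊔ Ideal.span (c '' S) := by
    intro S i hi x hx
    obtain ⟨σ, k, rfl, rfl⟩ := wiebe_perm S i hi
    rw [bot_sup_eq] at hx ⊢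
    have := hreg σ k x
    rw [Set.image_comp] at this
    exact this hx
  obtain ⟨h1, h2⟩ := wiebe_main n ⊥ a c U (by simp [hU]) hreg'
  simp only [bot_sup_eq] at h1 h2
  have hca : Ideal.span (Set.range c) ≤ Ideal.span (Set.range a) := by
    rw [Ideal.span_le]
    rintro _ ⟨i, rfl⟩
    rw [← hU, SetLike.mem_coe]
    simp only [Matrix.mulVec, dotProduct]
    exact Ideal.sum_mem _ fun j _ => Ideal.mul_mem_left _ _ (Ideal.subset_span (Set.mem_range_self j))
  have hda : ∀ j, U.det * a j ∈ Ideal.span (Set.range c) := by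
    intro j
    have := wiebe_cramer ⊥ a c U (by simp [hU]) j
    rw [Ideal.mem_bot, sub_eq_zero] at this
    rw [this]
    exact Ideal.sum_mem _ fun j _ => Ideal.mul_mem_left _ _ (Ideal.subset_span (Set.mem_range_self j))
  have hda' : ∀ y ∈ Ideal.span (Set.range a), y * U.det ∈ Ideal.span (Set.range c) := by
    intro y hy
    induction hy using Submodule.span_induction with
    | mem y hy => obtain ⟨j, rfl⟩ := hy; rw [mul_comm]; exact hda j
    | zero => simp
    | add y z _ _ hy hz => rw [add_mul]; exact add_mem hy hz
    | smul r y _ hy => rw [smul_eq_mul, mul_assoc]; exact Ideal.mul_mem_left _ _ hy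
  constructor
  · ext x
    rw [Submodule.mem_colon]
    constructor
    · intro hx
      exact h1 x (hx _ (Ideal.mem_span_singleton_self _))
    · intro hx p hp
      obtain ⟨q, rfl⟩ := Ideal.mem_span_singleton'.mp hp
      rw [smul_eq_mul, mul_left_comm]
      exact Ideal.mul_mem_left _ _ (hda' x hx)
  · ext x
    rw [Submodule.mem_colon]
    constructor
    · intro hx
      rw [sup_comm]
      exact h2 x fun j => hx (a j) (Ideal.subset_span (Set.mem_range_self j))
    · intro hx p hp
      rw [sup_comm, wiebe_mem_sup] at hx
      obtain ⟨y, hy⟩ := hx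
      have := add_mem (Ideal.mul_mem_right p _ hy) (Ideal.mul_mem_left _ y (hda' p hp))
      rw [smul_eq_mul]
      convert this using 1
      ring
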